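/- Let A be a one-register alternating finite-memory automaton over an infinite alphabet Σ with state set S and distinguished letters Δ. Let σ = σ1σ2⋯σm ∈ L(A), let C_0, C_1, …, C_m be an accepting run of A on σ, and let σ = τυφ with |υ| > 0 be a decomposition such that: for every nonempty subset Q of S, card(Σ^Q(C_{|τυ|}) ∩ [φ]) ≤ card(Σ^Q(C_{|τ|}) ∩ [υφ]); and S^{Σ∖[φ]}(C_{|τυ|}) = S^{Σ∖[υφ]}(C_{|τ|}). Then there exists a Δ-permutation α of Σ such that for every k ≥ 1 the word τ υ α(υ) α²(υ) ⋯ α^k(υ) α^k(φ) belongs to L(A). -/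

import Mathlib

/-- A one-register alternating finite-memory automaton over the alphabet `Sigma`,
with states `S`. -/
structure AFMA (Sigma : Type) (S : Type) where
  s0 : S
  F : Set S
  Δ : Finset Sigma
  θ0 : Sigma
  θ0_notin : θ0 ∉ Δ
  μΔ : S → Sigma → Set (Set S)
  μeq : S → Set (Set S)
  μne : S → Set (Set S × Set S)

namespace AFMA

variable {Sigma S : Type}

open Classical

/-- The induced transition function `μ^c` on a configuration `c` and a letter `σ`:
a set of sets of configurations. -/
noncomputable def muC (A : AFMA Sigma S) (c : S × Sigma) (σ : Sigma) : Set (Set (S × Sigma)) :=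
  if σ ∈ A.Δ then {D | ∃ Q ∈ A.μΔ c.1 σ, D = Q ×ˢ ({c.2} : Set Sigma)}
  else if σ = c.2 then {D | ∃ Q ∈ A.μeq c.1, D = Q ×ˢ ({c.2} : Set Sigma)}
  else {D | ∃ p ∈ A.μne c.1, D = p.1 ×ˢ ({c.2} : Set Sigma) ∪ p.2 ×ˢ ({σ} : Set Sigma)}

/-- `SetStep A C σ C'` : `C' ∈ μ^c(C, σ)`, i.e. `C'` is a union, over all `c ∈ C`,
of chosen elements of `μ^c(c, σ)`. -/
def SetStep (A : AFMA Sigma S) (C : Set (S × Sigma)) (σ : Sigma)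
    (C' : Set (S × Sigma)) : Prop :=
  ∃ g : S × Sigma → Set (S × Sigma),
    (∀ c ∈ C, g c ∈ A.muC c σ) ∧ C' = ⋃ c ∈ C, g c

/-- `Steps A C w C'` : reading the word `w` from the configuration set `C`
the automaton can reach the configuration set `C'`. -/
inductive Steps (A : AFMA Sigma S) :
    Set (S × Sigma) → List Sigma → Set (S × Sigma) → Prop
  | nil (C) : Steps A C [] C
  | cons {C C' C'' σ w} : A.SetStep C σ C' → Steps A C' w C'' → Steps A C (σ :: w) C''

/-- A set of configurations is accepting if all its states are accepting. -/
def Accepting (A : AFMA Sigma S) (C : Set (S × Sigma)) : Prop :=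
  ∀ c ∈ C, c.1 ∈ A.F

/-- The language accepted by `A`. -/
def Lang (A : AFMA Sigma S) : Set (List Sigma) :=
  {w | ∃ C, A.Steps {(A.s0, A.θ0)} w C ∧ A.Accepting C}

/-- The action of a permutation of the alphabet on a set of configurations. -/
def mapConfigs (α : Equiv.Perm Sigma) (C : Set (S × Sigma)) : Set (S × Sigma) :=
  (fun c => (c.1, α c.2)) '' C

end AFMA

/-- A `Δ`-permutation of the alphabet: a bijection fixing every distinguished letter. -/
def IsDeltaPerm {Sigma : Type} (Δ : Finset Sigma) (α : Equiv.Perm Sigma) : Prop :=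
  ∀ δ ∈ Δ, α δ = δ

namespace AFMA

variable {Sigma S : Type}

/-- `Σ(C)` : the set of (non-distinguished) letters occurring in configurations of `C`. -/
def lettersOf (Δ : Finset Sigma) (C : Set (S × Sigma)) : Set Sigma :=
  {σ | σ ∉ Δ ∧ ∃ s, (s, σ) ∈ C}

/-- `S^σ(C)` : the states paired with the letter `σ` in `C`. -/
def statesAt (C : Set (S × Sigma)) (σ : Sigma) : Set S :=
  {s | (s, σ) ∈ C}

/-- `S^{Γ}(C)` : the states paired with some letter of `Γ` in `C`. -/
def statesOn (C : Set (S × Sigma)) (Γ : Set Sigma) : Set S :=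
  ⋃ σ ∈ Γ, statesAt C σ

/-- `Σ^Q(C)` : the letters `σ` with `S^σ(C) = Q`. -/
def lettersWith (C : Set (S × Sigma)) (Q : Set S) : Set Sigma :=
  {σ | statesAt C σ = Q}

/-- The relation `C1,Γ1 ⪯_α C2,Γ2`. -/
def Preceq (Δ : Finset Sigma) (α : Equiv.Perm Sigma)
    (C1 : Set (S × Sigma)) (Γ1 : Set Sigma)
    (C2 : Set (S × Sigma)) (Γ2 : Set Sigma) : Prop :=
  Γ1 ⊆ ⇑α '' Γ2 ∧
  (⇑α '' Γ2) ∩ lettersOf Δ C1 ⊆ Γ1 ∧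
  (∀ σ ∈ Γ1, statesAt C1 σ ⊆ statesAt C2 (α⁻¹ σ)) ∧
  statesOn C1 Γ1ᶜ ⊆ statesOn C2 Γ2ᶜ

end AFMA

/-- The `k`-fold pumping `τ υ α(υ) α²(υ) ⋯ α^k(υ) α^k(φ)` of the decomposition
`τ ++ υ ++ φ` by the permutation `α`. -/
def pumpedWord {Sigma : Type} (α : Equiv.Perm Sigma) (τ υ φ : List Sigma) (k : ℕ) :
    List Sigma :=
  τ ++ υ ++ ((List.range k).flatMap fun i => υ.map ⇑(α ^ (i + 1))) ++ φ.map ⇑(α ^ k)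

/-!
Acceptance of a word from a single configuration is invariant under `Δ`-permutations of the
alphabet. Swapping two letters outside `Δ` that do not occur in the word therefore shows that such
letters are interchangeable as register contents. Hence, if `D` and `C` are the configuration sets
after `τυ` and `τ`, a relation `D, Γ₁ ⪯_α C, Γ₂` in which `Γ₂` contains all letters of `w` turns
acceptance of `w` from `C` into acceptance of `α(w)` from `D`, hence of `υ α(w)` from `C`. If
moreover `Γ₂` contains `[υφ]` and `α` maps it into itself, this step can be iterated from `w = υφ`.

The cardinality hypothesis gives an injection of the letters of `D` in `φ` into the letters of `C`
in `υφ` that preserves the sets of states. It extends to a permutation `α⁻¹` that moves all the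
other letters of `C` and `D` to fresh letters, none of which ever comes back. Then `Γ₂` may be taken
to be the union of the sets `αⁱ([υφ])`.
-/

/-! ### Permutations with prescribed values and escaping orbits -/

theorem exists_injOn_of_fiber_encard_le {X Y γ : Type*} [Nonempty Y] {a : X → γ} {b : Y → γ}
    {V : Set X} {Z : Set Y} (hV : V.Finite)
    (h : ∀ q ∈ a '' V, {x ∈ V | a x = q}.encard ≤ {y ∈ Z | b y = q}.encard) :
    ∃ f : X → Y, Set.InjOn f V ∧ Set.MapsTo f V Z ∧ ∀ x ∈ V, b (f x) = a x := by
  choose! F hF hFinj using fun q hq ↦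
    (hV.subset (Set.sep_subset V _)).exists_injOn_of_encard_le (h q hq)
  have hfib : ∀ x ∈ V, F (a x) x ∈ Z ∧ b (F (a x) x) = a x := fun x hx ↦
    hF (a x) (Set.mem_image_of_mem a hx) ⟨hx, rfl⟩
  refine ⟨fun x ↦ F (a x) x, fun x hx y hy hxy ↦ ?_, fun x hx ↦ (hfib x hx).1,
    fun x hx ↦ (hfib x hx).2⟩
  have hlabel : a x = a y := by
    rw [← (hfib x hx).2, ← (hfib y hy).2]
    exact congrArg b hxy
  refine hFinj (a x) (Set.mem_image_of_mem a hx) ⟨hx, rfl⟩ ⟨hy, hlabel.symm⟩ ?_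
  simpa only [hlabel] using hxy

theorem exists_embedding_prod_int {X : Type*} [Infinite X] {W F : Finset X} (hWF : W ⊆ F) :
    ∃ e : W × ℤ ↪ X, (∀ x, e (x, 0) = x) ∧ ∀ x n, n ≠ 0 → e (x, n) ∉ F := by
  have : Infinite {x // x ∉ F} := F.finite_toSet.infinite_compl.to_subtype
  obtain ⟨j, hj⟩ := Countable.exists_injective_nat (W × ℤ)
  let fresh : W × ℤ → X := fun p ↦ Infinite.natEmbedding {x // x ∉ F} (j p)
  have hfresh : fresh.Injective :=
    Subtype.val_injective.comp ((Infinite.natEmbedding _).injective.comp hj)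
  have hfreshF : ∀ p, fresh p ∉ F := fun p ↦ (Infinite.natEmbedding {x // x ∉ F} (j p)).2
  let e : W × ℤ → X := fun p ↦ if p.2 = 0 then p.1 else fresh p
  have he : e.Injective := by
    rintro ⟨x, n⟩ ⟨y, m⟩ h
    by_cases hn : n = 0 <;> by_cases hm : m = 0 <;> simp only [e, hn, hm, if_true, if_false] at h
    · exact Prod.ext (Subtype.ext h) (hn.trans hm.symm)
    · exact absurd (hWF x.2) (h ▸ hfreshF (y, m))
    · exact absurd (hWF y.2) (h ▸ hfreshF (x, n))
    · exact hfresh h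
  have he_zero (x : W) : e (x, 0) = x := if_pos rfl
  have he_ne (x : W) (n : ℤ) (hn : n ≠ 0) : e (x, n) = fresh (x, n) := if_neg hn
  exact ⟨⟨e, he⟩, he_zero, fun x n hn h ↦ hfreshF (x, n) (he_ne x n hn ▸ h)⟩

theorem exists_perm_extend_escape {X : Type*} [Infinite X] {W F : Finset X} (hWF : W ⊆ F)
    {U : Set X} (hU : U ⊆ W) {f : X → X} (hf : Set.MapsTo f U W) (hinj : Set.InjOn f U) :
    ∃ β : Equiv.Perm X, Set.EqOn β f U ∧ (∀ x ∈ F, x ∉ W → β x = x) ∧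
      ∀ x ∈ W, x ∉ U → ∀ i : ℕ, (β ^ (i + 1)) x ∉ F := by
  classical
  obtain ⟨γ, hγ⟩ := Set.MapsTo.exists_equiv_extend_of_card_eq (α := W) (by simp)
    (hf.comp (Set.mapsTo_preimage Subtype.val U))
    (hinj.comp Subtype.val_injective.injOn (Set.mapsTo_preimage Subtype.val U))
  obtain ⟨e, he, heF⟩ := exists_embedding_prod_int hWF
  -- The level `n` never decreases, and only level `0` meets `F`.
  let shift : Equiv.Perm (W × ℤ) :=
    γ.prodShear fun x ↦ if (x : X) ∈ U then Equiv.refl ℤ else Equiv.addRight 1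
  have hβ (p : W × ℤ) : shift.viaEmbedding e (e p) = e (shift p) :=
    Equiv.Perm.viaEmbedding_apply shift e p
  refine ⟨shift.viaEmbedding e, fun x hx ↦ ?_, fun x hxF hxW ↦ ?_, fun x hxW hxU i ↦ ?_⟩
  · have hshift : shift (⟨x, hU hx⟩, 0) = (γ ⟨x, hU hx⟩, 0) := by simp [shift, hx]
    calc shift.viaEmbedding e x = e (shift (⟨x, hU hx⟩, 0)) := by rw [← hβ, he]
      _ = f x := by rw [hshift, he]; exact hγ ⟨x, hU hx⟩ hx
  · refine Equiv.Perm.viaEmbedding_apply_of_notMem shift e x ?_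
    rintro ⟨⟨y, n⟩, rfl⟩
    rcases eq_or_ne n 0 with rfl | hn
    · exact hxW (he y ▸ y.2)
    · exact heF y n hn hxF
  · have hlevel : ∃ y : W, ∃ n : ℤ, 0 < n ∧ (shift.viaEmbedding e ^ (i + 1)) x = e (y, n) := by
      induction i with
      | zero =>
        refine ⟨γ ⟨x, hxW⟩, 1, one_pos, ?_⟩
        have hshift : shift (⟨x, hxW⟩, 0) = (γ ⟨x, hxW⟩, 1) := by simp [shift, hxU]
        rw [zero_add, pow_one, ← hshift, ← hβ, he]
      | succ i ih =>
        obtain ⟨y, n, hn, hy⟩ := ih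
        refine ⟨γ y, (shift (y, n)).2, ?_, ?_⟩
        · by_cases hyU : (y : X) ∈ U <;> simp [shift, hyU] <;> omega
        · rw [pow_succ', Equiv.Perm.mul_apply, hy, hβ]
          rfl
    obtain ⟨y, n, hn, hy⟩ := hlevel
    exact hy ▸ heF y n hn.ne'

/-! ### Pumped words -/

section PumpedWord

variable {Sigma : Type} (α : Equiv.Perm Sigma) (τ υ φ : List Sigma)

theorem pumpedWord_eq_append (k : ℕ) : pumpedWord α τ υ φ k = τ ++ pumpedWord α [] υ φ k := by
  simp [pumpedWord]

theorem pumpedWord_nil_zero : pumpedWord α [] υ φ 0 = υ ++ φ := by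
  simp [pumpedWord]

theorem pumpedWord_nil_succ (k : ℕ) :
    pumpedWord α [] υ φ (k + 1) = υ ++ (pumpedWord α [] υ φ k).map α := by
  simp [pumpedWord, List.range_succ_eq_map, List.map_flatMap, List.flatMap_map, pow_succ']

variable {α υ φ}

theorem mem_of_mem_pumpedWord_nil {Γ : Set Sigma} (hΓ : {x | x ∈ υ ++ φ} ⊆ Γ)
    (hα : Set.MapsTo α Γ Γ) {k : ℕ} : ∀ x ∈ pumpedWord α [] υ φ k, x ∈ Γ := by
  induction k with
  | zero => exact pumpedWord_nil_zero α υ φ ▸ fun x hx ↦ hΓ hx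
  | succ k ih =>
    intro x hx
    rw [pumpedWord_nil_succ, List.mem_append, List.mem_map] at hx
    obtain hx | ⟨y, hy, rfl⟩ := hx
    · exact hΓ (List.mem_append_left φ hx)
    · exact hα (ih y hy)

end PumpedWord

section DeltaPerm

variable {Sigma : Type} {Δ : Finset Sigma} {α : Equiv.Perm Sigma}

theorem IsDeltaPerm.apply_mem_iff (hα : IsDeltaPerm Δ α) {x : Sigma} : α x ∈ Δ ↔ x ∈ Δ := by
  refine ⟨fun h ↦ ?_, fun h ↦ (hα x h).symm ▸ h⟩
  rwa [← α.injective (hα _ h)]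

theorem IsDeltaPerm.inv (hα : IsDeltaPerm Δ α) : IsDeltaPerm Δ α⁻¹ := fun δ hδ ↦
  Equiv.Perm.inv_eq_iff_eq.2 (hα δ hδ).symm

theorem isDeltaPerm_swap [DecidableEq Sigma] {x y : Sigma} (hx : x ∉ Δ) (hy : y ∉ Δ) :
    IsDeltaPerm Δ (Equiv.swap x y) := fun _ hδ ↦
  Equiv.swap_apply_of_ne_of_ne (ne_of_mem_of_not_mem hδ hx) (ne_of_mem_of_not_mem hδ hy)

end DeltaPerm

namespace AFMA

variable {Sigma S : Type} {A : AFMA Sigma S} {C D : Set (S × Sigma)} {Δ : Finset Sigma}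
  {α : Equiv.Perm Sigma} {v w φ υ : List Sigma}

/-! ### Acceptance from a configuration -/

/-- Acceptance of a word by an alternating run that starts in a single configuration. It replaces
sequences of configuration sets by a recursion on the word, since the configurations of a set can be
treated independently of each other. -/
def AcceptsFrom (A : AFMA Sigma S) : List Sigma → S × Sigma → Prop
  | [], c => c.1 ∈ A.F
  | σ :: w, c => ∃ D ∈ A.muC c σ, ∀ d ∈ D, AcceptsFrom A w d

theorem exists_steps_of_acceptsFrom (h : ∀ c ∈ C, A.AcceptsFrom w c) :
    ∃ C', A.Steps C w C' ∧ A.Accepting C' := by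
  induction w generalizing C with
  | nil => exact ⟨C, Steps.nil C, h⟩
  | cons σ w ih =>
    choose! g hg hacc using h
    obtain ⟨C', hsteps, hC'⟩ := ih (C := ⋃ c ∈ C, g c) fun d hd ↦
      let ⟨c, hc, hdc⟩ := Set.mem_iUnion₂.1 hd
      hacc c hc d hdc
    exact ⟨C', Steps.cons ⟨g, hg, rfl⟩ hsteps, hC'⟩

theorem mem_lang_of_acceptsFrom (h : A.AcceptsFrom w (A.s0, A.θ0)) : w ∈ A.Lang :=
  exists_steps_of_acceptsFrom fun _ hc ↦ Set.mem_singleton_iff.1 hc ▸ h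

theorem Steps.acceptsFrom_append (hsteps : A.Steps C v D) (hD : ∀ d ∈ D, A.AcceptsFrom w d) :
    ∀ c ∈ C, A.AcceptsFrom (v ++ w) c := by
  induction hsteps with
  | nil C => exact hD
  | cons hstep _ ih =>
    obtain ⟨g, hg, rfl⟩ := hstep
    exact fun c hc ↦ ⟨g c, hg c hc, fun d hd ↦ ih hD d (Set.mem_biUnion hc hd)⟩

theorem Steps.acceptsFrom (hsteps : A.Steps C w D) (hD : A.Accepting D) :
    ∀ c ∈ C, A.AcceptsFrom w c := by
  simpa using hsteps.acceptsFrom_append (w := []) hD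

theorem steps_of_run {Cs : ℕ → Set (S × Sigma)} {L : List Sigma}
    (hstep : ∀ i (h : i < L.length), A.SetStep (Cs i) (L.get ⟨i, h⟩) (Cs (i + 1)))
    (u v w : List Sigma) (hL : L = u ++ v ++ w) :
    A.Steps (Cs u.length) v (Cs (u ++ v).length) := by
  induction v generalizing u with
  | nil => simpa using Steps.nil (Cs u.length)
  | cons σ v ih =>
    have hfirst : A.SetStep (Cs u.length) σ (Cs (u.length + 1)) := by
      simpa [hL] using hstep u.length (by simp [hL])
    exact Steps.cons hfirst (by simpa using ih (u ++ [σ]) (by simp [hL]))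

/-! ### Register contents -/

theorem snd_eq_or_of_mem_muC {c d : S × Sigma} {σ : Sigma} (hD : D ∈ A.muC c σ) (hd : d ∈ D) :
    d.2 = c.2 ∨ d.2 = σ ∧ σ ∉ A.Δ := by
  unfold muC at hD
  split_ifs at hD with hΔ
  · obtain ⟨Q, -, rfl⟩ := hD
    exact Or.inl hd.2
  · obtain ⟨Q, -, rfl⟩ := hD
    exact Or.inl hd.2
  · obtain ⟨p, -, rfl⟩ := hD
    exact hd.imp (·.2) fun h ↦ ⟨h.2, hΔ⟩

theorem Steps.snd_mem (hsteps : A.Steps C v D) {Γ : Set Sigma} (hC : ∀ c ∈ C, c.2 ∈ Γ)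
    (hv : ∀ σ ∈ v, σ ∉ A.Δ → σ ∈ Γ) : ∀ d ∈ D, d.2 ∈ Γ := by
  induction hsteps with
  | nil C => exact hC
  | cons hstep _ ih =>
    obtain ⟨g, hg, rfl⟩ := hstep
    refine ih (fun d hd ↦ ?_) fun σ hσ ↦ hv σ (List.mem_cons_of_mem _ hσ)
    obtain ⟨c, hc, hd⟩ := Set.mem_iUnion₂.1 hd
    obtain hdc | ⟨hdσ, hσ⟩ := snd_eq_or_of_mem_muC (hg c hc) hd
    · exact hdc ▸ hC c hc
    · exact hdσ ▸ hv _ List.mem_cons_self hσ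

/-! ### Invariance under permutations of the alphabet -/

theorem mapConfigs_prod_singleton (α : Equiv.Perm Sigma) (Q : Set S) (θ : Sigma) :
    mapConfigs α (Q ×ˢ {θ}) = Q ×ˢ {α θ} := by
  simp only [mapConfigs, Set.prod_singleton, Set.image_image]

theorem mapConfigs_mem_muC (hα : IsDeltaPerm A.Δ α) {c : S × Sigma} {σ : Sigma}
    (hD : D ∈ A.muC c σ) : mapConfigs α D ∈ A.muC (c.1, α c.2) (α σ) := by
  unfold muC at hD ⊢
  split_ifs at hD with hΔ heq
  · obtain ⟨Q, hQ, rfl⟩ := hD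
    rw [if_pos (hα.apply_mem_iff.2 hΔ)]
    exact ⟨Q, (hα σ hΔ).symm ▸ hQ, mapConfigs_prod_singleton α Q c.2⟩
  · obtain ⟨Q, hQ, rfl⟩ := hD
    rw [if_neg (mt hα.apply_mem_iff.1 hΔ), if_pos (congrArg α heq)]
    exact ⟨Q, hQ, mapConfigs_prod_singleton α Q c.2⟩
  · obtain ⟨p, hp, rfl⟩ := hD
    rw [if_neg (mt hα.apply_mem_iff.1 hΔ), if_neg (α.injective.ne heq)]
    refine ⟨p, hp, ?_⟩
    rw [← mapConfigs_prod_singleton, ← mapConfigs_prod_singleton]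
    exact Set.image_union _ _ _

theorem AcceptsFrom.map (hα : IsDeltaPerm A.Δ α) {c : S × Sigma} (h : A.AcceptsFrom w c) :
    A.AcceptsFrom (w.map α) (c.1, α c.2) := by
  induction w generalizing c with
  | nil => exact h
  | cons σ w ih =>
    obtain ⟨D, hD, hacc⟩ := h
    exact ⟨mapConfigs α D, mapConfigs_mem_muC hα hD, Set.forall_mem_image.2 fun d hd ↦
      ih (hacc d hd)⟩

theorem AcceptsFrom.of_notMem {s : S} {θ θ' : Sigma} (hθ : θ ∉ A.Δ) (hθ' : θ' ∉ A.Δ)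
    (hw : θ ∉ w) (hw' : θ' ∉ w) (h : A.AcceptsFrom w (s, θ)) : A.AcceptsFrom w (s, θ') := by
  classical
  have hfix : w.map (Equiv.swap θ θ') = w := (List.map_congr_left fun x hx ↦
    Equiv.swap_apply_of_ne_of_ne (ne_of_mem_of_not_mem hx hw) (ne_of_mem_of_not_mem hx hw')).trans
    (List.map_id w)
  simpa [hfix] using h.map (isDeltaPerm_swap hθ hθ')

/-! ### Pumping along the relation `⪯` -/

theorem Preceq.acceptsFrom_map {Γ₁ Γ₂ : Set Sigma} (hle : Preceq A.Δ α D Γ₁ C Γ₂)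
    (hα : IsDeltaPerm A.Δ α) (hC : ∀ c ∈ C, c.2 ∉ A.Δ) (hD : ∀ d ∈ D, d.2 ∉ A.Δ)
    (hw : ∀ x ∈ w, x ∈ Γ₂) (hacc : ∀ c ∈ C, A.AcceptsFrom w c) :
    ∀ d ∈ D, A.AcceptsFrom (w.map α) d := by
  rintro ⟨s, θ⟩ hd
  obtain ⟨-, hletters, hin, hout⟩ := hle
  by_cases hθ : θ ∈ Γ₁
  · have hc : (s, α⁻¹ θ) ∈ C := hin θ hθ hd
    simpa using (hacc _ hc).map hα
  · obtain ⟨η, hη, hc⟩ := Set.mem_iUnion₂.1 (hout (Set.mem_biUnion hθ hd))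
    have hθα : θ ∉ α '' Γ₂ := fun h ↦ hθ (hletters ⟨h, hD _ hd, s, hd⟩)
    have hsub : ∀ x ∈ w.map α, x ∈ α '' Γ₂ := List.forall_mem_map.2 fun x hx ↦
      Set.mem_image_of_mem α (hw x hx)
    exact ((hacc _ hc).map hα).of_notMem (mt hα.apply_mem_iff.1 (hC _ hc)) (hD _ hd)
      (fun h ↦ hη (α.injective.mem_set_image.1 (hsub _ h))) fun h ↦ hθα (hsub θ h)

theorem Preceq.acceptsFrom_pumpedWord {Γ₁ Γ₂ : Set Sigma} (hle : Preceq A.Δ α D Γ₁ C Γ₂)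
    (hα : IsDeltaPerm A.Δ α) (hC : ∀ c ∈ C, c.2 ∉ A.Δ) (hD : ∀ d ∈ D, d.2 ∉ A.Δ)
    (hΓ : {x | x ∈ υ ++ φ} ⊆ Γ₂) (hαΓ : Set.MapsTo α Γ₂ Γ₂) (hυ : A.Steps C υ D)
    (hφ : ∀ d ∈ D, A.AcceptsFrom φ d) (k : ℕ) :
    ∀ c ∈ C, A.AcceptsFrom (pumpedWord α [] υ φ k) c := by
  induction k with
  | zero => simpa only [pumpedWord_nil_zero] using hυ.acceptsFrom_append hφ
  | succ k ih =>
    rw [pumpedWord_nil_succ]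
    exact hυ.acceptsFrom_append
      (hle.acceptsFrom_map hα hC hD (mem_of_mem_pumpedWord_nil hΓ hαΓ) ih)

theorem preceq_inv_of_escape {β : Equiv.Perm Sigma} {P X : Set Sigma} (hP : Set.MapsTo β P X)
    (hstates : ∀ x ∈ P, statesAt D x ⊆ statesAt C (β x))
    (hescape : ∀ x ∈ lettersOf Δ D, x ∉ P → ∀ i : ℕ, (β ^ (i + 1)) x ∉ X)
    (hout : statesOn D Pᶜ ⊆ statesOn C {x | ∃ i : ℕ, (β ^ i) x ∈ X}ᶜ) :
    Preceq Δ β⁻¹ D P C {x | ∃ i : ℕ, (β ^ i) x ∈ X} := by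
  have himage (x : Sigma) :
      x ∈ ⇑β⁻¹ '' {x | ∃ i : ℕ, (β ^ i) x ∈ X} ↔ ∃ i : ℕ, (β ^ (i + 1)) x ∈ X := by
    simp [Equiv.image_eq_preimage_symm, pow_succ]
  refine ⟨fun x hx ↦ (himage x).2 ⟨0, by simpa using hP hx⟩, ?_, by simpa using hstates, hout⟩
  rintro x ⟨hx, hxD⟩
  obtain ⟨i, hi⟩ := (himage x).1 hx
  exact by_contra fun hxP ↦ hescape x hxD hxP i hi

/-! ### The permutation given by the cardinality condition -/

theorem exists_injOn_of_lettersWith_ncard_le [Nonempty Sigma] {X Y : Set Sigma} (hY : Y.Finite)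
    (hcard : ∀ Q : Set S, Q.Nonempty →
      (lettersWith D Q ∩ Y).ncard ≤ (lettersWith C Q ∩ X).ncard) :
    ∃ f : Sigma → Sigma, Set.InjOn f {x ∈ Y | (statesAt D x).Nonempty} ∧
      Set.MapsTo f {x ∈ Y | (statesAt D x).Nonempty} X ∧
      ∀ x ∈ {x ∈ Y | (statesAt D x).Nonempty}, statesAt C (f x) = statesAt D x := by
  refine exists_injOn_of_fiber_encard_le (hY.subset (Set.sep_subset _ _)) ?_
  rintro _ ⟨x, ⟨-, hne⟩, rfl⟩
  set Q := statesAt D x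
  calc {y ∈ {y ∈ Y | (statesAt D y).Nonempty} | statesAt D y = Q}.encard
      ≤ (lettersWith D Q ∩ Y).encard := Set.encard_le_encard fun y hy ↦ ⟨hy.2, hy.1.1⟩
    _ = (lettersWith D Q ∩ Y).ncard := (hY.inter_of_right _).cast_ncard_eq.symm
    _ ≤ (lettersWith C Q ∩ X).ncard := by exact_mod_cast hcard Q hne
    _ ≤ (lettersWith C Q ∩ X).encard := Set.ncard_le_encard _
    _ = {y ∈ X | statesAt C y = Q}.encard := congrArg Set.encard (Set.inter_comm _ _)

theorem exists_preceq_of_cards [Infinite Sigma] {W : Finset Sigma} {X Y : Set Sigma}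
    (hWΔ : Disjoint W Δ) (hX : X.Finite) (hYX : Y ⊆ X)
    (hC : ∀ c ∈ C, c.2 ∈ W) (hD : ∀ d ∈ D, d.2 ∈ W)
    (hcard : ∀ Q : Set S, Q.Nonempty →
      (lettersWith D Q ∩ Y).ncard ≤ (lettersWith C Q ∩ X).ncard)
    (hout : statesOn D Yᶜ ⊆ statesOn C Xᶜ) :
    ∃ α : Equiv.Perm Sigma, IsDeltaPerm Δ α ∧ ∃ Γ₁ Γ₂ : Set Sigma,
      X ⊆ Γ₂ ∧ Set.MapsTo α Γ₂ Γ₂ ∧ Preceq Δ α D Γ₁ C Γ₂ := by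
  classical
  obtain ⟨f, hinj, hfX, hfstates⟩ := exists_injOn_of_lettersWith_ncard_le
    (hX.subset hYX) hcard
  set P : Set Sigma := {x ∈ Y | (statesAt D x).Nonempty}
  have hPW : P ⊆ W := fun x ⟨_, s, hs⟩ ↦ hD (s, x) hs
  have hfW : Set.MapsTo f P W := fun x hx ↦ by
    obtain ⟨s, hs⟩ : (statesAt C (f x)).Nonempty := hfstates x hx ▸ hx.2
    exact hC (s, f x) hs
  obtain ⟨β, hβf, hβfix, hescape⟩ := exists_perm_extend_escape
    (F := W ∪ (Δ ∪ hX.toFinset)) Finset.subset_union_left hPW hfW hinj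
  have hβΔ : IsDeltaPerm Δ β := fun δ hδ ↦
    hβfix δ (by simp [hδ]) (Finset.disjoint_right.1 hWΔ hδ)
  have hescapeX : ∀ x ∈ W, x ∉ P → ∀ i : ℕ, (β ^ (i + 1)) x ∉ X :=
    fun x hxW hxP i hx ↦ hescape x hxW hxP i (by simp_all)
  refine ⟨β⁻¹, hβΔ.inv, P, {x | ∃ i : ℕ, (β ^ i) x ∈ X}, fun x hx ↦ ⟨0, hx⟩, ?_,
    preceq_inv_of_escape (fun x hx ↦ hβf hx ▸ hfX hx)
      (fun x hx ↦ hβf hx ▸ (hfstates x hx).superset)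
      (fun x ⟨_, s, hs⟩ ↦ hescapeX x (hD (s, x) hs)) ?_⟩
  · rintro x ⟨i, hi⟩
    exact ⟨i + 1, by simpa [pow_succ] using hi⟩
  · intro s hs
    obtain ⟨θ, hθP, hd⟩ := Set.mem_iUnion₂.1 hs
    have hθY : θ ∉ Y := fun h ↦ hθP ⟨h, s, hd⟩
    obtain ⟨η, hηX, hc⟩ := Set.mem_iUnion₂.1 (hout (Set.mem_biUnion hθY hd))
    refine Set.mem_biUnion (x := η) ?_ hc
    rintro ⟨_ | i, hi⟩
    · exact hηX hi
    · exact hescapeX η (hC (s, η) hc) (fun h ↦ hηX (hYX h.1)) i hi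

end AFMA

theorem afma_pumping_of_cards_general {Sigma S : Type} [Infinite Sigma]
    (A : AFMA Sigma S) (τ υ φ : List Sigma)
    (Cs : ℕ → Set (S × Sigma))
    (h0 : Cs 0 = {(A.s0, A.θ0)})
    (hstep : ∀ i (h : i < (τ ++ υ ++ φ).length),
      A.SetStep (Cs i) ((τ ++ υ ++ φ).get ⟨i, h⟩) (Cs (i + 1)))
    (hacc : A.Accepting (Cs (τ ++ υ ++ φ).length))
    (hcard : ∀ Q : Set S, Q.Nonempty →
      (AFMA.lettersWith (Cs (τ ++ υ).length) Q ∩ {x | x ∈ φ}).ncard ≤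
        (AFMA.lettersWith (Cs τ.length) Q ∩ {x | x ∈ υ ++ φ}).ncard)
    (hsub : AFMA.statesOn (Cs (τ ++ υ).length) {x | x ∈ φ}ᶜ ⊆
      AFMA.statesOn (Cs τ.length) {x | x ∈ υ ++ φ}ᶜ) :
    ∃ α : Equiv.Perm Sigma, IsDeltaPerm A.Δ α ∧
      ∀ k : ℕ, pumpedWord α τ υ φ k ∈ A.Lang := by
  classical
  have hτ : A.Steps {(A.s0, A.θ0)} τ (Cs τ.length) :=
    h0 ▸ AFMA.steps_of_run hstep [] τ (υ ++ φ) (by simp)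
  have hυ := AFMA.steps_of_run hstep τ υ φ rfl
  have hφ := AFMA.steps_of_run hstep (τ ++ υ) φ [] (by simp)
  let W : Finset Sigma := insert A.θ0 (τ ++ υ).toFinset \ A.Δ
  have hWΔ : ∀ x ∈ W, x ∉ A.Δ := fun x hx ↦ (Finset.mem_sdiff.1 hx).2
  have hC : ∀ c ∈ Cs τ.length, c.2 ∈ W :=
    hτ.snd_mem (Γ := W) (by simp [W, A.θ0_notin]) (by simp +contextual [W])
  have hD : ∀ d ∈ Cs (τ ++ υ).length, d.2 ∈ W :=
    hυ.snd_mem (Γ := W) hC (by simp +contextual [W])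
  obtain ⟨α, hα, Γ₁, Γ₂, hΓ, hαΓ, hle⟩ := AFMA.exists_preceq_of_cards Finset.sdiff_disjoint
    (List.finite_toSet (υ ++ φ)) (fun _ ↦ List.mem_append_right υ) hC hD hcard hsub
  have hpump := hle.acceptsFrom_pumpedWord hα (fun c hc ↦ hWΔ _ (hC c hc))
    (fun d hd ↦ hWΔ _ (hD d hd)) hΓ hαΓ hυ (hφ.acceptsFrom hacc)
  refine ⟨α, hα, fun k ↦ AFMA.mem_lang_of_acceptsFrom ?_⟩
  rw [pumpedWord_eq_append]
  exact hτ.acceptsFrom_append (hpump k) _ rfl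

/-- Corollary (sufficient condition, cardinality form): if `τυφ ∈ L(A)` via an
accepting run `Cs` such that for every nonempty `Q ⊆ S`,
`card(Σ^Q(C_{|τυ|}) ∩ [φ]) ≤ card(Σ^Q(C_{|τ|}) ∩ [υφ])` and
`S^{Σ∖[φ]}(C_{|τυ|}) = S^{Σ∖[υφ]}(C_{|τ|})`, then there is a `Δ`-permutation
`α` with `τ υ α(υ) α²(υ) ⋯ α^k(υ) α^k(φ) ∈ L(A)` for every `k ≥ 1`. -/
theorem afma_pumping_of_cards {Sigma S : Type} [Infinite Sigma] [Fintype S]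
    (A : AFMA Sigma S) (τ υ φ : List Sigma) (hυ : υ ≠ [])
    (Cs : ℕ → Set (S × Sigma))
    (h0 : Cs 0 = {(A.s0, A.θ0)})
    (hstep : ∀ i (h : i < (τ ++ υ ++ φ).length),
      A.SetStep (Cs i) ((τ ++ υ ++ φ).get ⟨i, h⟩) (Cs (i + 1)))
    (hacc : A.Accepting (Cs (τ ++ υ ++ φ).length))
    (hcard : ∀ Q : Set S, Q.Nonempty →
      (AFMA.lettersWith (Cs (τ ++ υ).length) Q ∩ {x | x ∈ φ}).ncard ≤
        (AFMA.lettersWith (Cs τ.length) Q ∩ {x | x ∈ υ ++ φ}).ncard)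
    (heq : AFMA.statesOn (Cs (τ ++ υ).length) {x | x ∈ φ}ᶜ =
      AFMA.statesOn (Cs τ.length) {x | x ∈ υ ++ φ}ᶜ) :
    ∃ α : Equiv.Perm Sigma, IsDeltaPerm A.Δ α ∧
      ∀ k : ℕ, 1 ≤ k → pumpedWord α τ υ φ k ∈ A.Lang :=
  let ⟨α, hα, hmem⟩ := afma_pumping_of_cards_general A τ υ φ Cs h0 hstep hacc hcard heq.subset
  ⟨α, hα, fun k _ ↦ hmem k⟩
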